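/- Let L ≥ 2 and θ ∈ ℝ. With P the projection onto the hole-free subspace, the self-dual Hamiltonian H_SD(θ) = H_BLBQ(θ) + U_KT H_BLBQ(θ) U_KT satisfies P H_SD(θ) P = P H_XXZ(θ) P + 3(L−1) sinθ · P, where H_XXZ(θ) = (cosθ−sinθ) Σ_{j=1}^{L−1} (−σˣ_jσˣ_{j+1} + σʸ_jσʸ_{j+1}) + sinθ Σ_{j=1}^{L−1} σᶻ_jσᶻ_{j+1}. -/

import Mathlib

noncomputable section
open Complex Matrix

/-- The Hilbert space operators of the `L`-site spin-1 chain: matrices on `(ℂ³)^{⊗L}`,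
with the tensor factors indexed by sites and the single-site ordered basis `(|+⟩,|0⟩,|−⟩)`. -/
abbrev Op (L : ℕ) : Type := Matrix (Fin L → Fin 3) (Fin L → Fin 3) ℂ

/-- The spin-1 matrix `Sˣ`. -/
def Sx : Matrix (Fin 3) (Fin 3) ℂ :=
  ((Real.sqrt 2 : ℝ) : ℂ)⁻¹ • !![0, 1, 0; 1, 0, 1; 0, 1, 0]

/-- The spin-1 matrix `Sʸ`. -/
def Sy : Matrix (Fin 3) (Fin 3) ℂ :=
  ((Real.sqrt 2 : ℝ) : ℂ)⁻¹ • !![0, -I, 0; I, 0, -I; 0, I, 0]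

/-- The spin-1 matrix `Sᶻ = diag(1,0,−1)`. -/
def Sz : Matrix (Fin 3) (Fin 3) ℂ := !![1, 0, 0; 0, 0, 0; 0, 0, -1]

/-- `site A j` is the one-site operator `A` acting on site `j` and identity elsewhere. -/
def site {L : ℕ} (A : Matrix (Fin 3) (Fin 3) ℂ) (j : Fin L) : Op L :=
  Matrix.of fun f g => ∏ k : Fin L, if k = j then A (f k) (g k) else (if f k = g k then 1 else 0)

/-- One factor `exp(iπ Sᶻ_u Sˣ_v)` of the Kennedy–Tasaki transformation. -/
def ktFactor {L : ℕ} (u v : Fin L) : Op L :=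
  NormedSpace.exp (((Real.pi : ℂ) * I) • (site Sz u * site Sx v))

/-- The Kennedy–Tasaki transformation `U_KT = ∏_{1 ≤ u < v ≤ L} exp(iπ Sᶻ_u Sˣ_v)`
(the factors pairwise commute, so the ordering is immaterial). -/
def UKT (L : ℕ) : Op L :=
  ((List.finRange L).map fun u =>
    ((List.finRange L).map fun v => if u < v then ktFactor u v else 1).prod).prod

/-- The p-wave basis vector `|↑⟩ = (|+⟩ − |−⟩)/√2`. -/
def up : Fin 3 → ℂ := ![((Real.sqrt 2 : ℝ) : ℂ)⁻¹, 0, -((Real.sqrt 2 : ℝ) : ℂ)⁻¹]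

/-- The p-wave basis vector `|↓⟩ = |0⟩`. -/
def down : Fin 3 → ℂ := ![0, 1, 0]

/-- The p-wave basis vector `|h⟩ = (|+⟩ + |−⟩)/√2`. -/
def hole : Fin 3 → ℂ := ![((Real.sqrt 2 : ℝ) : ℂ)⁻¹, 0, ((Real.sqrt 2 : ℝ) : ℂ)⁻¹]

/-- The rank-one operator `|a⟩⟨b|`. -/
def ketbra (a b : Fin 3 → ℂ) : Matrix (Fin 3) (Fin 3) ℂ := Matrix.vecMulVec a (star b)

/-- `σˣ = |↑⟩⟨↓| + |↓⟩⟨↑|` (annihilating `|h⟩`). -/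
def sigx : Matrix (Fin 3) (Fin 3) ℂ := ketbra up down + ketbra down up

/-- `σʸ = −i|↑⟩⟨↓| + i|↓⟩⟨↑|` (annihilating `|h⟩`). -/
def sigy : Matrix (Fin 3) (Fin 3) ℂ := (-I) • ketbra up down + I • ketbra down up

/-- `σᶻ = |↑⟩⟨↑| − |↓⟩⟨↓|` (annihilating `|h⟩`). -/
def sigz : Matrix (Fin 3) (Fin 3) ℂ := ketbra up up - ketbra down down

/-- `n = |↑⟩⟨↑| + |↓⟩⟨↓|` (annihilating `|h⟩`). -/
def nMat : Matrix (Fin 3) (Fin 3) ℂ := ketbra up up + ketbra down down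

/-- `h = |h⟩⟨h|`. -/
def hMat : Matrix (Fin 3) (Fin 3) ℂ := ketbra hole hole

/-- `P = ⊗_{j=1}^L n_j`, the orthogonal projection onto the hole-free subspace. -/
def Pproj (L : ℕ) : Op L := Matrix.of fun f g => ∏ k : Fin L, nMat (f k) (g k)

/-- The Heisenberg coupling `S_j · S_k`. -/
def heis {L : ℕ} (j k : Fin L) : Op L :=
  site Sx j * site Sx k + site Sy j * site Sy k + site Sz j * site Sz k

/-- The bilinear-biquadratic Hamiltonian
`H_BLBQ(θ) = Σ_{j=1}^{L−1} [cosθ (S_j·S_{j+1}) + sinθ (S_j·S_{j+1})²]`. -/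
def HBLBQ (L : ℕ) (θ : ℝ) : Op L :=
  ∑ j : Fin L, if h : (j : ℕ) + 1 < L then
    ((Real.cos θ : ℝ) : ℂ) • heis j ⟨(j : ℕ) + 1, h⟩
      + ((Real.sin θ : ℝ) : ℂ) • (heis j ⟨(j : ℕ) + 1, h⟩) ^ 2
  else 0

/-- The self-dual Hamiltonian `H_SD(θ) = H_BLBQ(θ) + U_KT H_BLBQ(θ) U_KT`. -/
def HSD (L : ℕ) (θ : ℝ) : Op L := HBLBQ L θ + UKT L * HBLBQ L θ * UKT L

/-- The spin-1/2 XXZ Hamiltonian written in the p-wave basis: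
`H_XXZ(θ) = (cosθ−sinθ) Σ_j (−σˣ_jσˣ_{j+1} + σʸ_jσʸ_{j+1}) + sinθ Σ_j σᶻ_jσᶻ_{j+1}`. -/
def HXXZ (L : ℕ) (θ : ℝ) : Op L :=
  ((Real.cos θ - Real.sin θ : ℝ) : ℂ) •
    (∑ j : Fin L, if h : (j : ℕ) + 1 < L then
      -(site sigx j * site sigx ⟨(j : ℕ) + 1, h⟩) + site sigy j * site sigy ⟨(j : ℕ) + 1, h⟩
    else 0)
  + ((Real.sin θ : ℝ) : ℂ) •
    (∑ j : Fin L, if h : (j : ℕ) + 1 < L then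
      site sigz j * site sigz ⟨(j : ℕ) + 1, h⟩
    else 0)

/-- The global product `∏_{j=1}^L exp(c • A_j)` of commuting single-site exponentials. -/
def globalProd (L : ℕ) (A : Matrix (Fin 3) (Fin 3) ℂ) (c : ℂ) : Op L :=
  ((List.finRange L).map fun j => NormedSpace.exp (c • site A j)).prod

/-- The symmetry flux `F^y_j = exp(−iπ Σ_{k<j} Sʸ_k) · Sʸ_j`. -/
def fluxY (L : ℕ) (j : Fin L) : Op L :=
  NormedSpace.exp ((-((Real.pi : ℂ) * I)) •
    ∑ k : Fin L, if (k : ℕ) < (j : ℕ) then site Sy k else 0) * site Sy j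


lemma exp_idem {n : Type*} [Fintype n] [DecidableEq n] (p : Matrix n n ℂ) (hp : p * p = p) (c : ℂ) :
    NormedSpace.exp (c • p) = 1 + (Complex.exp c - 1) • p := by
  have hpow : ∀ m : ℕ, p ^ (m + 1) = p := by
    intro m
    induction m with
    | zero => simp
    | succ m ih => rw [pow_succ, ih, hp]
  have h1 := (NormedSpace.exp_series_hasSum_exp' (𝕂 := ℂ) c).smul_const p
  have h2 := hasSum_ite_eq (0 : ℕ) (1 - p)
  have h3 := h1.add h2
  rw [NormedSpace.exp_eq_tsum ℂ]
  rw [← Complex.exp_eq_exp_ℂ] at h3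
  have : (1 + (Complex.exp c - 1) • p) = Complex.exp c • p + (1 - p) := by
    rw [sub_smul, one_smul]; abel
  rw [this, ← h3.tsum_eq]
  refine tsum_congr fun m => ?_
  cases m with
  | zero => simp
  | succ m => simp [smul_pow, hpow, smul_smul]

lemma exp_cube {n : Type*} [Fintype n] [DecidableEq n] (M : Matrix n n ℂ) (hM : M * M * M = M) :
    NormedSpace.exp (((Real.pi : ℂ) * I) • M) = 1 - (2 : ℂ) • (M * M) := by
  have h4 : M * M * (M * M) = M * M := by
    rw [← mul_assoc, hM]
  have h3 : M * (M * M) = M := by rw [← mul_assoc, hM]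
  set p := (1/2 : ℂ) • (M * M + M) with hp
  set q := (1/2 : ℂ) • (M * M - M) with hq
  have hpp : p * p = p := by
    simp only [hp, smul_mul_smul_comm, mul_add, add_mul, h4, hM, h3]
    module
  have hqq : q * q = q := by
    simp only [hq, smul_mul_smul_comm, mul_sub, sub_mul, h4, hM, h3]
    module
  have hpq : p * q = 0 := by
    simp only [hp, hq, smul_mul_smul_comm, mul_sub, add_mul, h4, hM, h3]
    module
  have hqp : q * p = 0 := by
    simp only [hp, hq, smul_mul_smul_comm, mul_add, sub_mul, h4, hM, h3]
    module
  have hsum : ((Real.pi : ℂ) * I) • M = ((Real.pi : ℂ) * I) • p + (-((Real.pi : ℂ) * I)) • q := by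
    simp only [hp, hq]; module
  rw [hsum, Matrix.exp_add_of_commute, exp_idem p hpp, exp_idem q hqq, Complex.exp_neg,
    Complex.exp_pi_mul_I]
  · simp only [mul_add, add_mul, mul_one, one_mul, smul_mul_smul_comm, hpq]
    simp only [hp, hq]
    norm_num
    module
  · apply Commute.smul_left; apply Commute.smul_right
    rw [commute_iff_eq, hpq, hqp]

lemma conj_comm {L : ℕ} {R : Type*} [Ring R] [Algebra ℂ R] (D : Fin L → Fin L → R)
    (hc : ∀ u v u' v', D u v * D u' v' = D u' v' * D u v)
    (hsq : ∀ u v, u < v → D u v * D u v = 1) (T : R) (j k : Fin L) (hjk : (k : ℕ) = j + 1)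
    (h1 : ∀ u v, u ≠ j → u ≠ k → v ≠ j → v ≠ k → u < v → Commute T (D u v))
    (h2 : ∀ u, u < j → Commute T (D u j * D u k))
    (h3 : ∀ v, k < v → Commute T (D j v * D k v)) (U : R)
    (hU : U = ((List.finRange L).map fun u =>
      ((List.finRange L).map fun v => if u < v then D u v else 1).prod).prod) :
    U * T * U = D j k * T * D j k := by
  classical
  let s : Set R := Set.range fun p : Fin L × Fin L => D p.1 p.2
  have hs : ∀ a ∈ s, ∀ b ∈ s, a * b = b * a := by
    rintro _ ⟨p, rfl⟩ _ ⟨q, rfl⟩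
    exact hc _ _ _ _
  let : CommRing (Algebra.adjoin ℂ s) :=
    { (Algebra.adjoin ℂ s).toRing with
      mul_comm := fun x y => (Algebra.isMulCommutative_adjoin ℂ hs).is_comm.comm x y }
  let E : Fin L → Fin L → Algebra.adjoin ℂ s := fun u v =>
    ⟨D u v, Algebra.subset_adjoin ⟨(u, v), rfl⟩⟩
  let G : Fin L → Fin L → Algebra.adjoin ℂ s := fun u v => if u < v then E u v else 1
  let φ : Algebra.adjoin ℂ s →* R := (Algebra.adjoin ℂ s).val.toRingHom.toMonoidHom
  have hφE : ∀ u v, φ (E u v) = D u v := fun u v => rfl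
  have hφ : Function.Injective φ := Subtype.val_injective
  have hUφ : U = φ (∏ u, ∏ v, G u v) := by
    rw [hU, ← List.prod_ofFn, List.ofFn_eq_map, map_list_prod, List.map_map]
    congr 2
    funext u
    simp only [Function.comp]
    rw [← List.prod_ofFn, List.ofFn_eq_map, map_list_prod, List.map_map]
    congr 2
    funext v
    simp only [Function.comp, G]
    split_ifs
    · rfl
    · simp
  have hG2 : ∀ u v, G u v * G u v = 1 := by
    intro u v
    simp only [G]
    split_ifs with h
    · apply hφ; rw [map_mul, hφE, hsq u v h, map_one]
    · simp
  have hne : j ≠ k := by rintro rfl; omega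
  have hlt : j < k := by rw [Fin.lt_def]; omega
  let S : Submonoid (Algebra.adjoin ℂ s) := (Submonoid.centralizer {T}).comap φ
  have hS : ∀ x, x ∈ S ↔ Commute T (φ x) := by
    intro x
    simp [S, Submonoid.mem_centralizer_iff, commute_iff_eq]
  have split : ∀ f : Fin L → Algebra.adjoin ℂ s,
      ∏ u, f u = f j * f k * ∏ u ∈ (Finset.univ.erase j).erase k, f u := by
    intro f
    rw [mul_assoc, Finset.mul_prod_erase _ f (by simp [hne.symm]),
      Finset.mul_prod_erase _ f (by simp)]
  have hrow : ∀ u, u ≠ j → u ≠ k → ∏ v, G u v ∈ S := by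
    intro u huj huk
    rw [split]
    refine S.mul_mem ?_ (S.prod_mem ?_)
    · rw [hS]
      have hn1 : (u:ℕ) ≠ j := fun h => huj (Fin.ext h)
      have hn2 : (u:ℕ) ≠ k := fun h => huk (Fin.ext h)
      by_cases h : u < j
      · have h' : u < k := h.trans hlt
        simp only [G, h, h', if_true, map_mul, hφE]
        exact h2 u h
      · have h' : ¬ u < k := by
          rw [Fin.lt_def] at h ⊢; omega
        simp [G, h, h']
    · intro v hv
      simp only [Finset.mem_erase, Finset.mem_univ, and_true] at hv
      rw [hS]
      simp only [G]
      split_ifs with h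
      · exact h1 u v huj huk hv.2 hv.1 h
      · simp
  obtain ⟨r, hrS, hr⟩ : ∃ r ∈ S, ∏ u, ∏ v, G u v = G j k * r := by
    refine ⟨(∏ v ∈ (Finset.univ.erase j).erase k, G j v * G k v) *
      ∏ u ∈ (Finset.univ.erase j).erase k, ∏ v, G u v, S.mul_mem (S.prod_mem ?_) (S.prod_mem ?_), ?_⟩
    · intro v hv
      simp only [Finset.mem_erase, Finset.mem_univ, and_true] at hv
      have hn1 : (v:ℕ) ≠ j := fun h => hv.2 (Fin.ext h)
      have hn2 : (v:ℕ) ≠ k := fun h => hv.1 (Fin.ext h)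
      rw [hS]
      by_cases h : k < v
      · have h' : j < v := hlt.trans h
        simp only [G, h, h', if_true, map_mul, hφE]
        exact h3 v h
      · have h' : ¬ j < v := by
          rw [Fin.lt_def] at h ⊢; omega
        simp [G, h, h']
    · intro u hu
      simp only [Finset.mem_erase, Finset.mem_univ, and_true] at hu
      exact hrow u hu.2 hu.1
    · rw [split, ← Finset.prod_mul_distrib, split (fun v => G j v * G k v)]
      have e1 : G j j = 1 := by simp [G]
      have e2 : G k k = 1 := by simp [G]
      have e3 : G k j = 1 := by simp [G, hlt.le]
      rw [e1, e2, e3]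
      ring
  have hr2 : r * r = 1 := by
    have hUU : (∏ u, ∏ v, G u v) * (∏ u, ∏ v, G u v) = 1 := by
      simp only [← Finset.prod_mul_distrib, hG2, Finset.prod_const_one]
    rw [hr] at hUU
    calc r * r = (G j k * G j k) * (r * r) := by rw [hG2, one_mul]
      _ = _ := by rw [← hUU]; ring
  have hjkφ : φ (G j k) = D j k := by simp [G, hlt, hφE]
  have hrT := (hS r).1 hrS
  have hr2' : φ r * φ r = 1 := by rw [← map_mul, hr2, map_one]
  have hcr : G j k * r = r * G j k := mul_comm _ _
  rw [hUφ, hr]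
  nth_rewrite 2 [hcr]
  rw [map_mul, map_mul, hjkφ]
  calc D j k * φ r * T * (φ r * D j k) = D j k * (φ r * T) * φ r * D j k := by noncomm_ring
    _ = D j k * T * (φ r * φ r) * D j k := by rw [← hrT.eq]; noncomm_ring
    _ = _ := by rw [hr2', mul_one]

def tens {L : ℕ} (A : Fin L → Matrix (Fin 3) (Fin 3) ℂ) : Op L :=
  Matrix.of fun f g => ∏ k : Fin L, A k (f k) (g k)

lemma tens_mul {L : ℕ} (A B : Fin L → Matrix (Fin 3) (Fin 3) ℂ) :
    tens A * tens B = tens (A * B) := by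
  ext f g
  simp only [tens, Matrix.mul_apply, Matrix.of_apply, Pi.mul_apply, ← Finset.prod_mul_distrib]
  rw [Finset.prod_univ_sum]
  simp

lemma site_eq {L : ℕ} (A : Matrix (Fin 3) (Fin 3) ℂ) (j : Fin L) :
    site A j = tens (Pi.mulSingle j A) := by
  ext f g
  simp only [site, tens, Matrix.of_apply]
  refine Finset.prod_congr rfl fun k _ => ?_
  by_cases h : k = j
  · subst h; simp
  · simp [h, Matrix.one_apply]

lemma P_eq (L : ℕ) : Pproj L = tens fun _ => nMat := rfl

lemma site_mul {L : ℕ} (A B : Matrix (Fin 3) (Fin 3) ℂ) (j : Fin L) :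
    site A j * site B j = site (A * B) j := by
  rw [site_eq, site_eq, site_eq, tens_mul, Pi.mulSingle_mul]

lemma site_comm {L : ℕ} (A B : Matrix (Fin 3) (Fin 3) ℂ) {j k : Fin L} (h : j ≠ k) :
    site A j * site B k = site B k * site A j := by
  rw [site_eq, site_eq, tens_mul, tens_mul]
  exact congrArg tens (Pi.mulSingle_commute (f := fun _ : Fin L => Matrix (Fin 3) (Fin 3) ℂ) h A B).eq

lemma site_apply {L : ℕ} (A : Matrix (Fin 3) (Fin 3) ℂ) (j : Fin L) (f g) :
    site A j f g = A (f j) (g j) * ∏ k ∈ Finset.univ.erase j, if f k = g k then 1 else 0 := by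
  simp only [site, Matrix.of_apply]
  rw [← Finset.mul_prod_erase _ _ (Finset.mem_univ j)]
  simp only [if_true]
  congr 1
  refine Finset.prod_congr rfl fun k hk => ?_
  rw [if_neg (Finset.ne_of_mem_erase hk)]

lemma site_add {L : ℕ} (A B : Matrix (Fin 3) (Fin 3) ℂ) (j : Fin L) :
    site (A + B) j = site A j + site B j := by
  ext f g
  simp only [site_apply, Matrix.add_apply, add_mul]

lemma site_smul {L : ℕ} (c : ℂ) (B : Matrix (Fin 3) (Fin 3) ℂ) (j : Fin L) :
    site (c • B) j = c • site B j := by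
  ext f g
  simp only [site_apply, Matrix.smul_apply, smul_eq_mul, mul_assoc]

lemma site_one {L : ℕ} (j : Fin L) : site 1 j = 1 := by
  ext f g
  simp only [site, Matrix.of_apply, Matrix.one_apply, ite_self]
  rw [Finset.prod_ite_zero]
  simp [funext_iff]

def pair {L : ℕ} (j k : Fin L) (A B : Matrix (Fin 3) (Fin 3) ℂ) : Op L := site A j * site B k

lemma pair_mul {L : ℕ} {j k : Fin L} (h : j ≠ k) (A B C D : Matrix (Fin 3) (Fin 3) ℂ) :
    pair j k A B * pair j k C D = pair j k (A * C) (B * D) := by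
  simp only [pair, ← site_mul]
  rw [mul_assoc, ← mul_assoc (site B k), ← site_comm C B h]
  noncomm_ring

lemma P_pair {L : ℕ} {j k : Fin L} (h : j ≠ k) (hn : nMat * nMat = nMat)
    (A B : Matrix (Fin 3) (Fin 3) ℂ) :
    Pproj L * pair j k A B * Pproj L =
      Pproj L * pair j k (nMat * A * nMat) (nMat * B * nMat) * Pproj L := by
  have hn' : ∀ x, nMat * (nMat * x) = nMat * x := fun x => by rw [← mul_assoc, hn]
  simp only [pair, site_eq, P_eq, tens_mul]
  congr 1
  funext l
  simp only [Pi.mul_apply]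
  by_cases h1 : l = j
  · subst h1
    simp only [Pi.mulSingle_eq_same, Pi.mulSingle_eq_of_ne h, mul_one]
    simp only [mul_assoc, hn, hn']
  · by_cases h2 : l = k
    · subst h2
      simp only [Pi.mulSingle_eq_same, Pi.mulSingle_eq_of_ne h1, one_mul]
      simp only [mul_assoc, hn, hn']
    · simp [h1, h2]

lemma P_site {L : ℕ} {j : Fin L} (A : Matrix (Fin 3) (Fin 3) ℂ) (hA : nMat * A = A * nMat) :
    Pproj L * site A j = site A j * Pproj L := by
  simp only [site_eq, P_eq, tens_mul]
  congr 1
  funext l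
  by_cases h1 : l = j
  · subst h1; simp [hA]
  · simp [h1]

set_option linter.unusedSimpArgs false

lemma ketbra_mul (a b c d : Fin 3 → ℂ) :
    ketbra a b * ketbra c d = (star b ⬝ᵥ c) • ketbra a d := by
  simp [ketbra, Matrix.vecMulVec_mul_vecMulVec]

lemma sq2 : ((Real.sqrt 2 : ℝ) : ℂ)⁻¹ * ((Real.sqrt 2 : ℝ) : ℂ)⁻¹ = 1 / 2 := by
  rw [← mul_inv, ← Complex.ofReal_mul, Real.mul_self_sqrt (by norm_num)]; norm_num

lemma d_uu : star up ⬝ᵥ up = 1 := by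
  simp [up, dotProduct, Fin.sum_univ_three, sq2]; norm_num
lemma d_dd : star down ⬝ᵥ down = 1 := by
  simp [down, dotProduct, Fin.sum_univ_three]
lemma d_hh : star hole ⬝ᵥ hole = 1 := by
  simp [hole, dotProduct, Fin.sum_univ_three, sq2]; norm_num
lemma d_ud : star up ⬝ᵥ down = 0 := by
  simp [up, down, dotProduct, Fin.sum_univ_three]
lemma d_du : star down ⬝ᵥ up = 0 := by
  simp [up, down, dotProduct, Fin.sum_univ_three]
lemma d_uh : star up ⬝ᵥ hole = 0 := by
  simp [up, hole, dotProduct, Fin.sum_univ_three]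
lemma d_hu : star hole ⬝ᵥ up = 0 := by
  simp [up, hole, dotProduct, Fin.sum_univ_three]
lemma d_dh : star down ⬝ᵥ hole = 0 := by
  simp [down, hole, dotProduct, Fin.sum_univ_three]
lemma d_hd : star hole ⬝ᵥ down = 0 := by
  simp [down, hole, dotProduct, Fin.sum_univ_three]

lemma ketbra_apply (a b : Fin 3 → ℂ) (i j : Fin 3) : ketbra a b i j = a i * star (b j) := rfl

lemma Sx_eq : Sx = ketbra down hole + ketbra hole down := by
  ext i j
  fin_cases i <;> fin_cases j <;> simp [Sx, ketbra_apply, down, hole]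
lemma Sy_eq : Sy = (-I) • ketbra up down + I • ketbra down up := by
  ext i j
  fin_cases i <;> fin_cases j <;> simp [Sy, ketbra_apply, down, up, mul_comm]
lemma Sz_eq : Sz = ketbra up hole + ketbra hole up := by
  ext i j
  fin_cases i <;> fin_cases j <;> simp [Sz, ketbra_apply, hole, up, sq2] <;> norm_num

def aM : Matrix (Fin 3) (Fin 3) ℂ := ketbra up up + ketbra hole hole
def bM : Matrix (Fin 3) (Fin 3) ℂ := ketbra down down + ketbra hole hole

lemma Sz_sq : Sz * Sz = aM := by
  simp [Sz_eq, aM, mul_add, add_mul, ketbra_mul, d_uu, d_dd, d_hh, d_ud, d_du, d_uh, d_hu, d_dh, d_hd, add_comm]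
lemma Sx_sq : Sx * Sx = bM := by
  simp [Sx_eq, bM, mul_add, add_mul, ketbra_mul, d_uu, d_dd, d_hh, d_ud, d_du, d_uh, d_hu, d_dh, d_hd, add_comm]
lemma aSz : aM * Sz = Sz := by
  simp [Sz_eq, aM, mul_add, add_mul, ketbra_mul, d_uu, d_dd, d_hh, d_ud, d_du, d_uh, d_hu, d_dh, d_hd, add_comm]
lemma bSx : bM * Sx = Sx := by
  simp [Sx_eq, bM, mul_add, add_mul, ketbra_mul, d_uu, d_dd, d_hh, d_ud, d_du, d_uh, d_hu, d_dh, d_hd, add_comm]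
lemma aa : aM * aM = aM := by
  simp [aM, mul_add, add_mul, ketbra_mul, d_uu, d_dd, d_hh, d_ud, d_du, d_uh, d_hu, d_dh, d_hd]
lemma bb : bM * bM = bM := by
  simp [bM, mul_add, add_mul, ketbra_mul, d_uu, d_dd, d_hh, d_ud, d_du, d_uh, d_hu, d_dh, d_hd]
lemma nn : nMat * nMat = nMat := by
  simp [nMat, mul_add, add_mul, ketbra_mul, d_uu, d_dd, d_hh, d_ud, d_du, d_uh, d_hu, d_dh, d_hd]
lemma ab : aM * bM = bM * aM := by
  simp [aM, bM, mul_add, add_mul, ketbra_mul, d_uu, d_dd, d_hh, d_ud, d_du, d_uh, d_hu, d_dh, d_hd]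
lemma na : nMat * aM = aM * nMat := by
  simp [aM, nMat, mul_add, add_mul, ketbra_mul, d_uu, d_dd, d_hh, d_ud, d_du, d_uh, d_hu, d_dh, d_hd]
lemma nb : nMat * bM = bM * nMat := by
  simp [bM, nMat, mul_add, add_mul, ketbra_mul, d_uu, d_dd, d_hh, d_ud, d_du, d_uh, d_hu, d_dh, d_hd]

/-- Anticommutation / commutation relations, in the form `{1 - 2 c, S} = 0` or `[c, S] = 0`. -/
lemma bx : bM * Sx = Sx * bM := by
  simp [Sx_eq, bM, mul_add, add_mul, ketbra_mul, d_uu, d_dd, d_hh, d_ud, d_du, d_uh, d_hu, d_dh, d_hd, add_comm]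
lemma by' : bM * Sy + Sy * bM = Sy := by
  simp [Sy_eq, bM, mul_add, add_mul, ketbra_mul, d_uu, d_dd, d_hh, d_ud, d_du, d_uh, d_hu, d_dh, d_hd, add_comm]
lemma bz : bM * Sz + Sz * bM = Sz := by
  simp [Sz_eq, bM, mul_add, add_mul, ketbra_mul, d_uu, d_dd, d_hh, d_ud, d_du, d_uh, d_hu, d_dh, d_hd, add_comm]
lemma ax : aM * Sx + Sx * aM = Sx := by
  simp [Sx_eq, aM, mul_add, add_mul, ketbra_mul, d_uu, d_dd, d_hh, d_ud, d_du, d_uh, d_hu, d_dh, d_hd, add_comm]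
lemma ay : aM * Sy + Sy * aM = Sy := by
  simp [Sy_eq, aM, mul_add, add_mul, ketbra_mul, d_uu, d_dd, d_hh, d_ud, d_du, d_uh, d_hu, d_dh, d_hd, add_comm]
lemma az : aM * Sz = Sz * aM := by
  simp [Sz_eq, aM, mul_add, add_mul, ketbra_mul, d_uu, d_dd, d_hh, d_ud, d_du, d_uh, d_hu, d_dh, d_hd, add_comm]

lemma kt_eq {L : ℕ} {u v : Fin L} (h : u ≠ v) :
    ktFactor u v = 1 - (2 : ℂ) • (site aM u * site bM v) := by
  have := pair_mul h
  simp only [pair] at this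
  rw [ktFactor, exp_cube, this, Sz_sq, Sx_sq]
  rw [this, this, Sz_sq, Sx_sq, aSz, bSx]

lemma site_commute {L : ℕ} {A B : Matrix (Fin 3) (Fin 3) ℂ} (hAB : A * B = B * A) (j k : Fin L) :
    Commute (site A j) (site B k) := by
  by_cases h : j = k
  · subst h; rw [commute_iff_eq, site_mul, site_mul, hAB]
  · exact site_comm A B h

lemma sign_commute {L : ℕ} {j k : Fin L} (h : j ≠ k) (C S : Matrix (Fin 3) (Fin 3) ℂ)
    (hS : C * S = S * C ∨ C * S + S * C = S) :
    Commute (pair j k S S) (site C j + site C k - (2 : ℂ) • (site C j * site C k)) := by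
  have e1 : site C j = pair j k C 1 := by simp [pair, site_one]
  have e2 : site C k = pair j k 1 C := by simp [pair, site_one]
  have e3 : site C j * site C k = pair j k C C := rfl
  rw [e3, e1, e2, commute_iff_eq]
  simp only [mul_add, mul_sub, add_mul, sub_mul, pair_mul h, mul_smul_comm, smul_mul_assoc,
    mul_one, one_mul]
  rcases hS with hS | hS
  · rw [hS]
  · have hS' : C * S = S + (-1 : ℂ) • (S * C) := by
      rw [eq_comm, ← sub_eq_zero]; nth_rewrite 1 [← hS]; module
    rw [hS']
    simp only [pair, site_add, site_smul, mul_add, add_mul, mul_smul_comm, smul_mul_assoc]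
    module

lemma heis_commute_sign {L : ℕ} {j k : Fin L} (h : j ≠ k) (C : Matrix (Fin 3) (Fin 3) ℂ)
    (hC : C = aM ∨ C = bM) :
    Commute (heis j k) (site C j + site C k - (2 : ℂ) • (site C j * site C k)) := by
  have e : heis j k = pair j k Sx Sx + pair j k Sy Sy + pair j k Sz Sz := rfl
  rw [e]
  rcases hC with rfl | rfl
  · exact ((sign_commute h _ _ (Or.inr ax)).add_left (sign_commute h _ _ (Or.inr ay))).add_left
      (sign_commute h _ _ (Or.inl az))
  · exact ((sign_commute h _ _ (Or.inl bx)).add_left (sign_commute h _ _ (Or.inr by'))).add_left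
      (sign_commute h _ _ (Or.inr bz))

lemma heis_commute_site {L : ℕ} {j k u : Fin L} (hj : u ≠ j) (hk : u ≠ k)
    (C : Matrix (Fin 3) (Fin 3) ℂ) : Commute (heis j k) (site C u) := by
  have key : ∀ S, Commute (site S j * site S k) (site C u) := fun S =>
    Commute.mul_left (site_comm S C hj.symm) (site_comm S C hk.symm)
  exact ((key _).add_left (key _)).add_left (key _)

lemma UKT_conj {L : ℕ} {j k : Fin L} (hjk : (k : ℕ) = j + 1) (T : Op L)
    (hT : ∀ x, Commute (heis j k) x → Commute T x) :
    UKT L * T * UKT L = (1 - (2 : ℂ) • pair j k aM bM) * T * (1 - (2 : ℂ) • pair j k aM bM) := by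
  have hne : j ≠ k := by rintro rfl; omega
  refine conj_comm (fun u v => 1 - (2 : ℂ) • (site aM u * site bM v)) ?_ ?_ T j k hjk ?_ ?_ ?_ _ ?_
  · intro u v u' v'
    have : Commute (site aM u * site bM v) (site aM u' * site bM v') :=
      ((site_commute rfl u u').mul_right (site_commute ab u v')).mul_left
        ((site_commute ab.symm v u').mul_right (site_commute rfl v v'))
    exact ((Commute.one_left _).sub_left
      (((Commute.one_right _).sub_right (this.smul_right _)).smul_left _)).eq
  · intro u v huv
    have := pair_mul huv.ne aM bM aM bM
    simp only [pair, aa, bb] at this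
    simp only [mul_sub, sub_mul, mul_one, one_mul, smul_mul_smul_comm, this]
    module
  · intro u v h1 h2 h3 h4 _
    refine (Commute.one_right _).sub_right (Commute.smul_right ?_ _)
    exact (hT _ (heis_commute_site h1 h2 _)).mul_right (hT _ (heis_commute_site h3 h4 _))
  · intro u hu
    have huk : u ≠ k := by rintro rfl; rw [Fin.lt_def] at hu; omega
    have e : (1 - (2 : ℂ) • (site aM u * site bM j)) * (1 - (2 : ℂ) • (site aM u * site bM k)) =
        1 - (2 : ℂ) • (site aM u * (site bM j + site bM k - (2 : ℂ) • (site bM j * site bM k))) := by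
      have e1 : site aM u * site bM j * (site aM u * site bM k) =
          site aM u * (site bM j * site bM k) := by
        rw [mul_assoc, ← mul_assoc (site bM j), (site_commute ab.symm j u).eq, mul_assoc,
          ← mul_assoc, site_mul, aa]
      simp only [mul_sub, sub_mul, mul_add, mul_one, one_mul, e1, mul_smul_comm, smul_mul_assoc]
      module
    simp only [e]
    exact hT _ ((Commute.one_right _).sub_right (Commute.smul_right
      ((heis_commute_site hu.ne huk _).mul_right (heis_commute_sign hne _ (Or.inr rfl))) _))
  · intro v hv
    have hvj : v ≠ j := by rintro rfl; rw [Fin.lt_def] at hv; omega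
    have e : (1 - (2 : ℂ) • (site aM j * site bM v)) * (1 - (2 : ℂ) • (site aM k * site bM v)) =
        1 - (2 : ℂ) • ((site aM j + site aM k - (2 : ℂ) • (site aM j * site aM k)) * site bM v) := by
      have e1 : site aM j * site bM v * (site aM k * site bM v) =
          (site aM j * site aM k) * site bM v := by
        rw [mul_assoc, ← mul_assoc (site bM v), (site_commute ab.symm v k).eq, mul_assoc,
          site_mul, bb, mul_assoc]
      simp only [mul_sub, sub_mul, add_mul, mul_one, one_mul, e1, mul_smul_comm, smul_mul_assoc]
      module
    simp only [e]
    exact hT _ ((Commute.one_right _).sub_right (Commute.smul_right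
      ((heis_commute_sign hne _ (Or.inl rfl)).mul_right (heis_commute_site hvj hv.ne' _)) _))
  · rw [UKT]
    congr 2
    funext u
    congr 2
    funext v
    split_ifs with h
    · rw [kt_eq h.ne]
    · rfl

lemma PP (L : ℕ) : Pproj L * Pproj L = Pproj L := by
  rw [P_eq, tens_mul]
  congr 1
  funext l
  exact nn

lemma P_nn {L : ℕ} {j k : Fin L} (h : j ≠ k) :
    Pproj L * pair j k nMat nMat * Pproj L = Pproj L := by
  have := P_pair h nn 1 1
  rw [mul_one, nn] at this
  rw [← this, pair, site_one, site_one, mul_one, mul_one, PP]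

lemma P_heis {L : ℕ} {j k : Fin L} (h : j ≠ k) :
    Pproj L * heis j k * Pproj L = Pproj L * pair j k Sy Sy * Pproj L := by
  have e : heis j k = pair j k Sx Sx + pair j k Sy Sy + pair j k Sz Sz := rfl
  have h1 : nMat * Sx * nMat = 0 := by
    simp [Sx_eq, nMat, mul_add, add_mul, ketbra_mul, d_uu, d_dd, d_hh, d_ud, d_du, d_uh, d_hu, d_dh, d_hd]
  have h2 : nMat * Sz * nMat = 0 := by
    simp [Sz_eq, nMat, mul_add, add_mul, ketbra_mul, d_uu, d_dd, d_hh, d_ud, d_du, d_uh, d_hu, d_dh, d_hd]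
  have h0 : pair j k 0 0 = 0 := by
    have := site_smul 0 0 j
    simp only [zero_smul] at this
    rw [pair, this, zero_mul]
  rw [e]
  simp only [mul_add, add_mul]
  rw [P_pair h nn Sx Sx, P_pair h nn Sz Sz, h1, h2, h0]
  simp

lemma P_heis2 {L : ℕ} {j k : Fin L} (h : j ≠ k) :
    Pproj L * heis j k ^ 2 * Pproj L = Pproj L * (pair j k (ketbra down down) (ketbra down down)
      + pair j k (ketbra up up) (ketbra up up) + pair j k (ketbra up down) (ketbra up down)
      + pair j k (ketbra down up) (ketbra down up) + pair j k nMat nMat) * Pproj L := by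
  have e : heis j k = pair j k Sx Sx + pair j k Sy Sy + pair j k Sz Sz := rfl
  have h0 : pair j k 0 0 = 0 := by
    have := site_smul 0 0 j
    simp only [zero_smul] at this
    rw [pair, this, zero_mul]
  rw [e, pow_two]
  simp only [mul_add, add_mul, pair_mul h]
  have hxx : nMat * (Sx * Sx) * nMat = ketbra down down := by
    simp [Sx_eq, nMat, mul_add, add_mul, ketbra_mul, d_uu, d_dd, d_hh, d_ud, d_du, d_uh, d_hu, d_dh, d_hd]
  have hyy : nMat * (Sy * Sy) * nMat = nMat := by
    simp [Sy_eq, nMat, mul_add, add_mul, ketbra_mul, d_uu, d_dd, d_hh, d_ud, d_du, d_uh, d_hu, d_dh, d_hd, smul_smul, add_comm]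
  have hzz : nMat * (Sz * Sz) * nMat = ketbra up up := by
    simp [Sz_eq, nMat, mul_add, add_mul, ketbra_mul, d_uu, d_dd, d_hh, d_ud, d_du, d_uh, d_hu, d_dh, d_hd]
  have hxy : nMat * (Sx * Sy) * nMat = 0 := by
    simp [Sx_eq, Sy_eq, nMat, mul_add, add_mul, ketbra_mul, d_uu, d_dd, d_hh, d_ud, d_du, d_uh, d_hu, d_dh, d_hd]
  have hyx : nMat * (Sy * Sx) * nMat = 0 := by
    simp [Sx_eq, Sy_eq, nMat, mul_add, add_mul, ketbra_mul, d_uu, d_dd, d_hh, d_ud, d_du, d_uh, d_hu, d_dh, d_hd]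
  have hzy : nMat * (Sz * Sy) * nMat = 0 := by
    simp [Sz_eq, Sy_eq, nMat, mul_add, add_mul, ketbra_mul, d_uu, d_dd, d_hh, d_ud, d_du, d_uh, d_hu, d_dh, d_hd]
  have hyz : nMat * (Sy * Sz) * nMat = 0 := by
    simp [Sz_eq, Sy_eq, nMat, mul_add, add_mul, ketbra_mul, d_uu, d_dd, d_hh, d_ud, d_du, d_uh, d_hu, d_dh, d_hd]
  have hxz : nMat * (Sx * Sz) * nMat = ketbra down up := by
    simp [Sz_eq, Sx_eq, nMat, mul_add, add_mul, ketbra_mul, d_uu, d_dd, d_hh, d_ud, d_du, d_uh, d_hu, d_dh, d_hd]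
  have hzx : nMat * (Sz * Sx) * nMat = ketbra up down := by
    simp [Sz_eq, Sx_eq, nMat, mul_add, add_mul, ketbra_mul, d_uu, d_dd, d_hh, d_ud, d_du, d_uh, d_hu, d_dh, d_hd]
  rw [P_pair h nn (Sx * Sx), P_pair h nn (Sx * Sy), P_pair h nn (Sx * Sz),
    P_pair h nn (Sy * Sx), P_pair h nn (Sy * Sy), P_pair h nn (Sy * Sz),
    P_pair h nn (Sz * Sx), P_pair h nn (Sz * Sy), P_pair h nn (Sz * Sz),
    hxx, hyy, hzz, hxy, hyx, hzy, hyz, hxz, hzx, h0]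
  simp only [mul_zero, zero_mul]
  abel

lemma conj_aux {R : Type*} [Ring R] (P D X : R) (h : P * D = D * P) :
    P * (D * X * D) * P = D * (P * X * P) * D := by
  calc _ = (P * D) * X * (D * P) := by simp only [mul_assoc]
    _ = (D * P) * X * (P * D) := congrArg₂ (fun a b => a * X * b) h h.symm
    _ = _ := by simp only [mul_assoc]

set_option maxHeartbeats 1000000 in
lemma bond {L : ℕ} {j k : Fin L} (hjk : (k : ℕ) = j + 1) (c s : ℂ) :
    Pproj L * ((c • heis j k + s • heis j k ^ 2) + UKT L * (c • heis j k + s • heis j k ^ 2) * UKT L)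
        * Pproj L =
      Pproj L * ((c - s) • (-(site sigx j * site sigx k) + site sigy j * site sigy k)
        + s • (site sigz j * site sigz k)) * Pproj L + (3 * s) • Pproj L := by
  have h : j ≠ k := by rintro rfl; omega
  rw [UKT_conj hjk _ (fun x hx => (hx.smul_left c).add_left ((hx.pow_left 2).smul_left s))]
  set D : Op L := 1 - (2 : ℂ) • pair j k aM bM with hD
  have hDP : Pproj L * D = D * Pproj L := by
    simp only [hD, mul_sub, sub_mul, mul_one, one_mul, mul_smul_comm, smul_mul_assoc, pair]
    rw [← mul_assoc, P_site _ na, mul_assoc, P_site _ nb, mul_assoc]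
  set T := c • heis j k + s • heis j k ^ 2 with hT
  set T' := c • pair j k Sy Sy + s • (pair j k (ketbra down down) (ketbra down down)
      + pair j k (ketbra up up) (ketbra up up) + pair j k (ketbra up down) (ketbra up down)
      + pair j k (ketbra down up) (ketbra down up) + pair j k nMat nMat) with hT'
  have hTT : Pproj L * T * Pproj L = Pproj L * T' * Pproj L := by
    rw [hT, hT', mul_add, add_mul, mul_smul_comm, mul_smul_comm, smul_mul_assoc, smul_mul_assoc,
      P_heis h, P_heis2 h, mul_add _ (c • _), add_mul, mul_smul_comm c, mul_smul_comm s,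
      smul_mul_assoc, smul_mul_assoc]
  have conj : ∀ X, Pproj L * (D * X * D) * Pproj L = D * (Pproj L * X * Pproj L) * D := by
    exact fun X => conj_aux _ _ X hDP
  have hP3 : (3 * s) • Pproj L = Pproj L * ((3 * s) • pair j k nMat nMat) * Pproj L := by
    rw [mul_smul_comm, smul_mul_assoc, P_nn h]
  rw [mul_add, add_mul, conj, hTT, ← conj, hP3, ← add_mul, ← mul_add, ← add_mul, ← mul_add]
  congr 2
  change _ = (c - s) • (-(pair j k sigx sigx) + pair j k sigy sigy) + s • (pair j k sigz sigz) + _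
  have ps1 : ∀ (x : ℂ) A B, pair j k (x • A) B = x • pair j k A B := by
    intro x A B; simp [pair, site_smul]
  have ps2 : ∀ (x : ℂ) A B, pair j k A (x • B) = x • pair j k A B := by
    intro x A B; simp [pair, site_smul]
  have pa1 : ∀ A A' B, pair j k (A + A') B = pair j k A B + pair j k A' B := by
    intro A A' B; simp [pair, site_add, add_mul]
  have pa2 : ∀ A B B', pair j k A (B + B') = pair j k A B + pair j k A B' := by
    intro A A' B; simp [pair, site_add, mul_add]
  have pz1 : ∀ B, pair j k 0 B = 0 := by
    intro B; simpa using ps1 0 0 B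
  have pz2 : ∀ B, pair j k B 0 = 0 := by
    intro B; simpa using ps2 0 B 0
  have hz : sigz = ketbra up up + (-1 : ℂ) • ketbra down down := by rw [sigz]; module
  rw [hT', hD, Sy_eq, hz, sigx, sigy, nMat, aM, bM]
  simp only [mul_sub, sub_mul, mul_add, add_mul, mul_one, one_mul, mul_smul_comm, smul_mul_assoc,
    pair_mul h, pa1, pa2, ps1, ps2, pz1, pz2, ketbra_mul, d_uu, d_dd, d_hh, d_ud, d_du, d_uh, d_hu, d_dh, d_hd,
    zero_smul, one_smul, smul_zero, add_zero, zero_add, sub_zero]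
  simp only [smul_smul, smul_add, neg_mul, mul_neg, I_mul_I, neg_neg]
  module

lemma sum_count (L : ℕ) (hL : 2 ≤ L) {V : Type*} [AddCommGroup V] [Module ℂ V] (x : V) :
    (∑ j : Fin L, if (j : ℕ) + 1 < L then x else 0) = ((L : ℂ) - 1) • x := by
  obtain ⟨m, rfl⟩ : ∃ m, L = m + 1 := ⟨L - 1, by omega⟩
  rw [Fin.sum_univ_castSucc]
  simp
  module

/-- With `P` the projection onto the hole-free subspace,
`P H_SD(θ) P = P H_XXZ(θ) P + 3(L−1) sinθ · P`. -/
theorem proj_HSD (L : ℕ) (hL : 2 ≤ L) (θ : ℝ) :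
    Pproj L * HSD L θ * Pproj L =
      Pproj L * HXXZ L θ * Pproj L
        + (3 * ((L : ℂ) - 1) * ((Real.sin θ : ℝ) : ℂ)) • Pproj L := by
  have e1 : HSD L θ = ∑ j : Fin L, if h : (j : ℕ) + 1 < L then
      ((((Real.cos θ : ℝ) : ℂ) • heis j ⟨(j : ℕ) + 1, h⟩
        + ((Real.sin θ : ℝ) : ℂ) • (heis j ⟨(j : ℕ) + 1, h⟩) ^ 2)
      + UKT L * (((Real.cos θ : ℝ) : ℂ) • heis j ⟨(j : ℕ) + 1, h⟩
        + ((Real.sin θ : ℝ) : ℂ) • (heis j ⟨(j : ℕ) + 1, h⟩) ^ 2) * UKT L) else 0 := by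
    rw [HSD, HBLBQ, Finset.mul_sum, Finset.sum_mul, ← Finset.sum_add_distrib]
    refine Finset.sum_congr rfl fun j _ => ?_
    split_ifs
    · rfl
    · simp
  have e2 : (3 * ((L : ℂ) - 1) * ((Real.sin θ : ℝ) : ℂ)) • Pproj L =
      ∑ j : Fin L, if (j : ℕ) + 1 < L then (3 * ((Real.sin θ : ℝ) : ℂ)) • Pproj L else 0 := by
    rw [sum_count L hL, smul_smul]
    congr 1
    ring
  rw [e1, e2, HXXZ, Finset.smul_sum, Finset.smul_sum, ← Finset.sum_add_distrib, Finset.mul_sum,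
    Finset.sum_mul, Finset.mul_sum, Finset.sum_mul, ← Finset.sum_add_distrib]
  refine Finset.sum_congr rfl fun j _ => ?_
  split_ifs with h
  · rw [bond (k := ⟨(j : ℕ) + 1, h⟩) rfl, Complex.ofReal_sub]
  · simp

end
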